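/- A nonprincipal filter F on ω is μ_p̂-measurable if and only if F is μ_p̂-small, i.e., there is a partition of ω into disjoint finite intervals (I_n) and sets J_n ⊆ 2^{I_n} with Σ_n μ_p̂({x : x↾I_n ∈ J_n}) < ∞ such that every X ∈ F satisfies X↾I_n ∈ J_n for infinitely many n. -/

import Mathlib

open MeasureTheory Filter Set
open scoped ENNReal

/-- `μ` is the product (Bernoulli) measure on `Bool^ι` determined by the sequence `p`:
a probability measure giving each cylinder set its natural product value. -/
def IsBernoulli {ι : Type*} (μ : Measure (ι → Bool)) (p : ι → ℝ≥0∞) : Prop :=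
  IsProbabilityMeasure μ ∧
    ∀ (s : Finset ι) (f : ι → Bool),
      μ {x | ∀ i ∈ s, x i = f i} = ∏ i ∈ s, (if f i then p i else 1 - p i)

/-- The subset of `2^ω` corresponding to a filter on `ω`, via characteristic functions. -/
def filterSet (F : Filter ℕ) : Set (ℕ → Bool) := {x | {n | x n = true} ∈ F}

/-- `H` is small with respect to `μ`: there is a partition of `ω` into consecutive finite
intervals `I n = [k n, k (n+1))` and sets `J n` of reals depending only on coordinates in
`I n`, such that every member of `H` is in infinitely many `J n`, and `∑ μ (J n) < ∞`. -/
def IsSmall (μ : Measure (ℕ → Bool)) (H : Set (ℕ → Bool)) : Prop :=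
  ∃ (k : ℕ → ℕ) (J : ℕ → Set (ℕ → Bool)),
    k 0 = 0 ∧ StrictMono k ∧
    (∀ n (x y : ℕ → Bool), (∀ i, k n ≤ i → i < k (n + 1) → x i = y i) →
      (x ∈ J n ↔ y ∈ J n)) ∧
    H ⊆ {x | {n | x ∈ J n}.Infinite} ∧
    ∑' n, μ (J n) ≠ ⊤

/-!
A small set is null by the Borel–Cantelli lemma. Conversely, `filterSet F` is invariant under finite
changes, so if it is measurable then it is null or conull. It is not conull: as `p n ≤ 1 / 2`, some
coupling of `μ` with itself is carried by pairs of disjoint sets, so every conull set contains two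
disjoint sets, which cannot both belong to `F`.

Every null set `N` is covered infinitely often by sets `C j` of rapidly decreasing measure, each of
which depends on two consecutive blocks of an interval partition: write small open covers of `N` as
unions of sets depending on initial segments, and forget the coordinates before the `j`-th block.
Forgetting them costs a constant factor, which is compensated by starting the next block late.

To pass from two blocks to one, let `P` be the union of the even blocks. The set `B j` of points
with a large section of `C j` over their restriction to `P` has small measure by Fubini and depends
on a single block. If every member of `F` lies in infinitely many `B j`, these witness smallness.
Otherwise some `x` in `F` lies in only finitely many, and the small sections of the `C j` over the
restriction of `x` to `P` depend on single blocks. They witness smallness, because replacing the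
restriction of `y` to `P` by that of `x` does not lead out of `F`.
-/

section DependsOn

variable {ι : Type*} {X : ι → Type*} {S P : Set ι}

lemma dependsOn_mem_iUnion {κ : Sort*} {A : κ → Set (∀ i, X i)}
    (hA : ∀ j, DependsOn (· ∈ A j) S) : DependsOn (· ∈ ⋃ j, A j) S := by
  intro x y hxy
  simp only [mem_iUnion, eq_iff_iff]
  exact exists_congr fun j => (hA j hxy).to_iff

lemma dependsOn_mem_pi (t : ∀ i, Set (X i)) : DependsOn (· ∈ S.pi t) S := by
  intro x y hxy
  simp only [Set.mem_pi, eq_iff_iff]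
  exact forall₂_congr fun i hi => by rw [hxy i hi]

variable {β : Type*} {f : (∀ i, X i) → β} [DecidablePred (· ∈ P)]

lemma dependsOn_comp_piecewise_left (hf : DependsOn f S) (y : ∀ i, X i) :
    DependsOn (fun x => f (P.piecewise x y)) (S ∩ P) := by
  refine fun x x' hx => hf fun i hi => ?_
  by_cases hP : i ∈ P
  · simpa only [piecewise_eq_of_mem _ _ _ hP] using hx i ⟨hi, hP⟩
  · simp only [piecewise_eq_of_notMem _ _ _ hP]

lemma dependsOn_comp_piecewise_right (hf : DependsOn f S) (x : ∀ i, X i) :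
    DependsOn (fun y => f (P.piecewise x y)) (S \ P) := by
  refine fun y y' hy => hf fun i hi => ?_
  by_cases hP : i ∈ P
  · simp only [piecewise_eq_of_mem _ _ _ hP]
  · simpa only [piecewise_eq_of_notMem _ _ _ hP] using hy i ⟨hi, hP⟩

lemma measurableSet_of_dependsOn [∀ i, Countable (X i)] [∀ i, MeasurableSpace (X i)]
    [∀ i, MeasurableSingletonClass (X i)] {A : Set (∀ i, X i)} (hS : S.Finite)
    (hA : DependsOn (· ∈ A) S) : MeasurableSet A := by
  have := hS.to_subtype
  have hA' : A = S.domRestrict ⁻¹' (S.domRestrict '' A) := by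
    refine (subset_preimage_image _ A).antisymm ?_
    rintro x ⟨y, hy, hyx⟩
    exact (hA fun i hi => congrFun hyx ⟨i, hi⟩).mp hy
  rw [hA']
  exact Set.measurable_restrict S (to_countable _).measurableSet

end DependsOn

section ProductMeasure

variable {ι : Type*} {X : ι → Type*} [∀ i, MeasurableSpace (X i)]

lemma measurable_piecewise_prod (S : Set ι) [DecidablePred (· ∈ S)] :
    Measurable fun z : (∀ i, X i) × (∀ i, X i) => S.piecewise z.1 z.2 := by
  refine measurable_pi_lambda _ fun i => ?_
  by_cases hi : i ∈ S
  · simp only [piecewise_eq_of_mem _ _ _ hi]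
    fun_prop
  · simp only [piecewise_eq_of_notMem _ _ _ hi]
    fun_prop

variable (μ : ∀ i, Measure (X i)) [∀ i, IsProbabilityMeasure (μ i)]

lemma measurePreserving_piecewise_infinitePi (S : Set ι) [DecidablePred (· ∈ S)] :
    MeasurePreserving (fun z : (∀ i, X i) × (∀ i, X i) => S.piecewise z.1 z.2)
      ((Measure.infinitePi μ).prod (Measure.infinitePi μ)) (Measure.infinitePi μ) := by
  refine ⟨measurable_piecewise_prod S, Measure.eq_infinitePi μ fun s t ht => ?_⟩
  have hpre : (fun z : (∀ i, X i) × (∀ i, X i) => S.piecewise z.1 z.2) ⁻¹' (s : Set ι).pi t =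
      (({i ∈ s | i ∈ S} : Finset ι) : Set ι).pi t ×ˢ
        (({i ∈ s | i ∉ S} : Finset ι) : Set ι).pi t := by
    ext ⟨x, y⟩
    simp only [mem_preimage, mem_prod, Set.mem_pi, Finset.mem_coe, Finset.mem_filter, Set.piecewise]
    grind
  rw [Measure.map_apply (measurable_piecewise_prod S) (.pi s.countable_toSet fun i _ => ht i),
    hpre, Measure.prod_prod, Measure.infinitePi_pi μ fun i _ => ht i,
    Measure.infinitePi_pi μ fun i _ => ht i, Finset.prod_filter_mul_prod_filter_not]

variable {μ} {A B : Set (∀ i, X i)}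

lemma infinitePi_inter_of_dependsOn {S : Set ι} (hA : DependsOn (· ∈ A) S)
    (hB : DependsOn (· ∈ B) Sᶜ) (hAB : NullMeasurableSet (A ∩ B) (Measure.infinitePi μ)) :
    Measure.infinitePi μ (A ∩ B) = Measure.infinitePi μ A * Measure.infinitePi μ B := by
  classical
  rw [← (measurePreserving_piecewise_infinitePi μ S).measure_preimage hAB, ← Measure.prod_prod]
  congr 1
  ext ⟨x, y⟩
  exact and_congr (hA fun i hi => piecewise_eq_of_mem S x y hi).to_iff
    (hB fun i hi => piecewise_eq_of_notMem S x y hi).to_iff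

/- Conditioning on a non-null tail set does not change the measure of boxes, hence it does not
change the product measure at all. -/
theorem infinitePi_eq_zero_or_compl_eq_zero_of_dependsOn
    (hA : NullMeasurableSet A (Measure.infinitePi μ))
    (htail : ∀ s : Finset ι, DependsOn (· ∈ A) (s : Set ι)ᶜ) :
    Measure.infinitePi μ A = 0 ∨ Measure.infinitePi μ Aᶜ = 0 := by
  refine or_iff_not_imp_left.2 fun h0 => ?_
  have hcond : ProbabilityTheory.cond (Measure.infinitePi μ) A = Measure.infinitePi μ := by
    refine Measure.eq_infinitePi μ fun s t ht => ?_
    have hbox : MeasurableSet ((s : Set ι).pi t) := .pi s.countable_toSet fun i _ => ht i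
    rw [ProbabilityTheory.cond_apply' hbox, inter_comm,
      infinitePi_inter_of_dependsOn (dependsOn_mem_pi t) (htail s)
        (hbox.nullMeasurableSet.inter hA),
      Measure.infinitePi_pi μ fun i _ => ht i, mul_comm, mul_assoc,
      ENNReal.mul_inv_cancel h0 (measure_ne_top _ A), mul_one]
  rw [← hcond, ProbabilityTheory.cond, Measure.smul_apply, Measure.restrict_apply₀' hA,
    compl_inter_self, measure_empty, smul_zero]

end ProductMeasure

section LargeSections

variable {ι : Type*} {X : ι → Type*} [∀ i, MeasurableSpace (X i)] {C : Set (∀ i, X i)}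

/-- The points whose coordinates in `S` determine a section of `C` of `μ`-measure at least `c`. The
section is taken among full points `y`, whose coordinates in `S` are ignored. -/
def largeSections (μ : Measure (∀ i, X i)) (S : Set ι) [DecidablePred (· ∈ S)]
    (C : Set (∀ i, X i)) (c : ℝ≥0∞) : Set (∀ i, X i) :=
  {x | c ≤ μ {y | S.piecewise x y ∈ C}}

lemma dependsOn_mem_largeSections {μ : Measure (∀ i, X i)} {S T : Set ι}
    [DecidablePred (· ∈ S)] (hC : DependsOn (· ∈ C) T) (c : ℝ≥0∞) :
    DependsOn (· ∈ largeSections μ S C c) (T ∩ S) := by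
  intro x x' hx
  have hsec : {y | S.piecewise x y ∈ C} = {y | S.piecewise x' y ∈ C} :=
    ext fun y => (dependsOn_comp_piecewise_left hC y hx).to_iff
  simp only [largeSections, mem_ofPred_eq, hsec]

/- Markov's inequality: the measure of a random section of `C` has mean `μ C`. -/
lemma mul_infinitePi_largeSections_le (μ : ∀ i, Measure (X i)) [∀ i, IsProbabilityMeasure (μ i)]
    (S : Set ι) [DecidablePred (· ∈ S)] (hC : MeasurableSet C) (c : ℝ≥0∞) :
    c * Measure.infinitePi μ (largeSections (Measure.infinitePi μ) S C c) ≤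
      Measure.infinitePi μ C := by
  have hpre := measurable_piecewise_prod S hC
  calc c * Measure.infinitePi μ (largeSections (Measure.infinitePi μ) S C c)
    _ ≤ ∫⁻ x, Measure.infinitePi μ {y | S.piecewise x y ∈ C} ∂Measure.infinitePi μ :=
        mul_meas_ge_le_lintegral (measurable_measure_prodMk_left hpre) c
    _ = Measure.infinitePi μ C := by
        rw [← (measurePreserving_piecewise_infinitePi μ S).measure_preimage hC.nullMeasurableSet,
          Measure.prod_apply hpre]
        rfl

end LargeSections

section Saturation

variable {ι : Type*} {X : ι → Type*} {S T : Set ι} {H : Set (∀ i, X i)}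

/-- The points which can be moved into `H` by changing their coordinates in `S`. -/
def saturation (S : Set ι) [DecidablePred (· ∈ S)] (H : Set (∀ i, X i)) : Set (∀ i, X i) :=
  ⋃ t, {x | S.piecewise t x ∈ H}

lemma subset_saturation [DecidablePred (· ∈ S)] : H ⊆ saturation S H := fun x hx =>
  mem_iUnion.2 ⟨x, by rwa [mem_ofPred_eq, piecewise_same]⟩

lemma dependsOn_mem_saturation [DecidablePred (· ∈ S)] (hH : DependsOn (· ∈ H) T) :
    DependsOn (· ∈ saturation S H) (T \ S) :=
  dependsOn_mem_iUnion fun t => dependsOn_comp_piecewise_right hH t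

variable [∀ i, MeasurableSpace (X i)] [∀ i, Finite (X i)] [∀ i, MeasurableSingletonClass (X i)]
  {μ : ∀ i, Measure (X i)} [∀ i, IsProbabilityMeasure (μ i)]

lemma exists_le_infinitePi_pi_singleton (hμ : ∀ i a, μ i {a} ≠ 0) (hS : S.Finite) :
    ∃ c ≠ 0, ∀ t : ∀ i, X i, c ≤ Measure.infinitePi μ (S.pi fun i => {t i}) := by
  lift S to Finset ι using hS
  refine ⟨∏ i ∈ S, ⨅ a, μ i {a}, Finset.prod_ne_zero_iff.2 fun i _ => ?_, fun t => ?_⟩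
  · have := (μ i).nonempty_of_neZero
    obtain ⟨a, ha⟩ := exists_eq_ciInf_of_finite (f := fun a => μ i {a})
    exact ha ▸ hμ i a
  · rw [Measure.infinitePi_pi μ fun i _ => measurableSet_singleton _]
    exact Finset.prod_le_prod' fun i _ => iInf_le _ _

lemma exists_mul_infinitePi_saturation_le [DecidablePred (· ∈ S)] (hμ : ∀ i a, μ i {a} ≠ 0)
    (hS : S.Finite) : ∃ c ≠ 0, ∀ H, MeasurableSet H →
      c * Measure.infinitePi μ (saturation S H) ≤ Measure.infinitePi μ H := by
  obtain ⟨c, hc0, hc⟩ := exists_le_infinitePi_pi_singleton hμ hS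
  refine ⟨c, hc0, fun H hH => le_trans ?_ (mul_infinitePi_largeSections_le μ Sᶜ hH c)⟩
  gcongr
  refine iUnion_subset fun t x hx => (hc t).trans (measure_mono fun y hy => ?_)
  have hyt : S.piecewise y x = S.piecewise t x :=
    funext fun i => ite_congr rfl (hy i) fun _ => rfl
  rwa [mem_ofPred_eq, piecewise_compl, hyt]

end Saturation

section FiberUnion

variable {κ α β : Type*} (φ : κ → β) (T : κ → Set α)

/-- The blocks obtained from a family `T` by merging the members whose indices have the same
image under `φ`. -/
def fiberUnion (n : β) : Set α :=
  ⋃ i ∈ φ ⁻¹' {n}, T i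

variable {φ T}

lemma infinite_setOf_mem_fiberUnion (hφ : ∀ n, (φ ⁻¹' {n}).Finite) {x : α}
    (hx : {i | x ∈ T i}.Infinite) : {n | x ∈ fiberUnion φ T n}.Infinite := fun hfin =>
  hx ((hfin.preimage' fun n _ => hφ n).subset fun i hi => mem_biUnion (mem_singleton (φ i)) hi)

lemma tsum_measure_fiberUnion_le [Countable κ] [MeasurableSpace α] (μ : Measure α) :
    ∑' n, μ (fiberUnion φ T n) ≤ ∑' i, μ (T i) :=
  calc ∑' n, μ (fiberUnion φ T n)
    _ ≤ ∑' n, ∑' i : φ ⁻¹' {n}, μ (T i) :=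
        ENNReal.tsum_le_tsum fun _ => measure_biUnion_le μ (to_countable _) T
    _ = ∑' i, μ (T i) := ENNReal.tsum_fiberwise (fun i => μ (T i)) φ

lemma dependsOn_mem_fiberUnion {ι : Type*} {X : ι → Type*} {T : κ → Set (∀ i, X i)}
    {S : β → Set ι} (hT : ∀ i, DependsOn (· ∈ T i) (S (φ i))) (n : β) :
    DependsOn (· ∈ fiberUnion φ T n) (S n) :=
  dependsOn_mem_iUnion fun i => dependsOn_mem_iUnion fun hi => hi ▸ hT i

end FiberUnion

section Sequences

lemma exists_strictMono_forall_succ {P : ℕ → ℕ → ℕ → Prop} (hP : ∀ j n, ∃ m > n, P j n m) :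
    ∃ k : ℕ → ℕ, k 0 = 0 ∧ StrictMono k ∧ ∀ j, P j (k j) (k (j + 1)) := by
  choose g hg hPg using hP
  let k (j : ℕ) : ℕ := Nat.rec 0 g j
  exact ⟨k, rfl, strictMono_nat_of_lt_succ fun j => hg j (k j), fun j => hPg j (k j)⟩

lemma infinite_setOf_inter_Ico_nonempty {k : ℕ → ℕ} (hk : StrictMono k) {M : Set ℕ}
    (hM : M.Infinite) : {j | (M ∩ Ico (k j) (k (j + 1))).Nonempty}.Infinite := fun hfin => by
  have hcover := (finite_Iio (k 0)).union (hfin.biUnion fun j _ => finite_Ico (k j) (k (j + 1)))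
  refine hM (hcover.subset fun m hm => or_iff_not_imp_left.2 fun h0 => ?_)
  have hblocks := iUnion_Ico_map_succ_eq_Ici (fun j => hk.monotone (Nat.zero_le j))
    hk.not_bddAbove_range_of_wellFoundedLT
  obtain ⟨j, hj⟩ := mem_iUnion.1 (hblocks.ge (show k ⊥ ≤ m from not_lt.1 h0))
  exact mem_biUnion ⟨m, hm, hj⟩ hj

end Sequences

section NullSet

variable {X : ℕ → Type*}

lemma exists_pairwise_disjoint_iUnion_eq_of_isOpen [∀ n, TopologicalSpace (X n)]
    [∀ n, DiscreteTopology (X n)] {U : Set (∀ n, X n)} (hU : IsOpen U) :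
    ∃ E : ℕ → Set (∀ n, X n), (∀ n, DependsOn (· ∈ E n) (Iio n)) ∧
      Pairwise (Function.onFun Disjoint E) ∧ ⋃ n, E n = U := by
  let G (n : ℕ) : Set (∀ n, X n) := {x | PiNat.cylinder x n ⊆ U}
  have hG {m n : ℕ} (hmn : m ≤ n) : DependsOn (· ∈ G m) (Iio n) := fun x y hxy => by
    have hcyl : PiNat.cylinder x m = PiNat.cylinder y m :=
      PiNat.mem_cylinder_iff_eq.1 fun i hi => hxy i (hi.trans_le hmn)
    simp only [G, mem_ofPred_eq, hcyl]
  refine ⟨disjointed G, fun n x y hxy => ?_, disjoint_disjointed G, ?_⟩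
  · simp only [disjointed_eq_inter_compl, mem_inter_iff, mem_iInter, mem_compl_iff, eq_iff_iff]
    exact and_congr (hG le_rfl hxy).to_iff
      (forall₂_congr fun m hm => not_congr (hG hm.le hxy).to_iff)
  · rw [iUnion_disjointed]
    refine (iUnion_subset fun n x (hx : PiNat.cylinder x n ⊆ U) =>
      hx (PiNat.self_mem_cylinder x n)).antisymm fun x hx => ?_
    obtain ⟨_, ⟨y, n, rfl⟩, hxy, hyU⟩ :=
      (PiNat.isTopologicalBasis_cylinders X).exists_subset_of_mem_open hx hU
    exact mem_iUnion.2 ⟨n, (PiNat.mem_cylinder_iff_eq.1 hxy).trans_subset hyU⟩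

lemma exists_summable_cover_of_null [∀ n, Countable (X n)] [∀ n, MeasurableSpace (X n)]
    [∀ n, MeasurableSingletonClass (X n)] {μ : Measure (∀ n, X n)} [IsFiniteMeasure μ]
    {N : Set (∀ n, X n)} (hN : μ N = 0) :
    ∃ H : ℕ → Set (∀ n, X n), (∀ m, DependsOn (· ∈ H m) (Iio m)) ∧ ∑' m, μ (H m) ≠ ⊤ ∧
      ∀ x ∈ N, {m | x ∈ H m}.Infinite := by
  let _ (n : ℕ) : TopologicalSpace (X n) := ⊥
  have (n : ℕ) : DiscreteTopology (X n) := ⟨rfl⟩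
  have hU (i : ℕ) : ∃ U ⊇ N, IsOpen U ∧ μ U < 2⁻¹ ^ i :=
    N.exists_isOpen_lt_of_lt _ (hN ▸ ENNReal.pow_pos (by simp) i)
  choose U hNU hUo hUμ using hU
  choose E hE hEdisj hEU using fun i => exists_pairwise_disjoint_iUnion_eq_of_isOpen (hUo i)
  have hEsum : ∑' z : ℕ × ℕ, μ (E z.1 z.2) ≤ ∑' i : ℕ, 2⁻¹ ^ i := by
    rw [ENNReal.tsum_prod (f := fun i n => μ (E i n))]
    refine ENNReal.tsum_le_tsum fun i => ?_
    rw [← measure_iUnion (hEdisj i) fun n => measurableSet_of_dependsOn (finite_Iio n) (hE i n),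
      hEU i]
    exact (hUμ i).le
  refine ⟨fiberUnion (fun z : ℕ × ℕ => z.1 + z.2) fun z => E z.1 z.2,
    dependsOn_mem_fiberUnion fun z => (hE z.1 z.2).mono (Iio_subset_Iio (Nat.le_add_left _ _)),
    ne_top_of_le_ne_top (by simp [ENNReal.tsum_geometric])
      ((tsum_measure_fiberUnion_le μ).trans hEsum),
    fun x hx => infinite_setOf_mem_fiberUnion (fun n => ?_) ?_⟩
  · exact (Finset.HasAntidiagonal.antidiagonal n).finite_toSet.subset fun z hz =>
      Finset.HasAntidiagonal.mem_antidiagonal.2 hz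
  · choose n hn using fun i => mem_iUnion.1 ((hEU i).symm ▸ hNU i hx)
    exact infinite_of_injective_forall_mem (f := fun i => (i, n i))
      (fun i j hij => congrArg Prod.fst hij) hn

lemma exists_blocks_cover_of_null [∀ n, Finite (X n)] [∀ n, MeasurableSpace (X n)]
    [∀ n, MeasurableSingletonClass (X n)] {μ : ∀ n, Measure (X n)}
    [∀ n, IsProbabilityMeasure (μ n)] (hμ : ∀ n a, μ n {a} ≠ 0) {N : Set (∀ n, X n)}
    (hN : Measure.infinitePi μ N = 0) {ε : ℕ → ℝ≥0∞} (hε : ∀ j, 0 < ε j) :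
    ∃ (k : ℕ → ℕ) (C : ℕ → Set (∀ n, X n)), k 0 = 0 ∧ StrictMono k ∧
      (∀ j, DependsOn (· ∈ C j) (Ico (k j) (k (j + 2)))) ∧
      (∀ j, Measure.infinitePi μ (C j) ≤ ε j) ∧ ∀ x ∈ N, {j | x ∈ C j}.Infinite := by
  obtain ⟨H, hH, hHsum, hHcov⟩ := exists_summable_cover_of_null hN
  have htail (j n : ℕ) :
      ∃ m > n, ∑' i, Measure.infinitePi μ (saturation (Iio n) (H (i + m))) ≤ ε j := by
    obtain ⟨c, hc0, hc⟩ := exists_mul_infinitePi_saturation_le hμ (finite_Iio n)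
    have hsum : ∑' m, Measure.infinitePi μ (saturation (Iio n) (H m)) ≠ ⊤ := by
      refine fun htop => hHsum (top_le_iff.1 ?_)
      rw [← ENNReal.mul_top hc0, ← htop, ← ENNReal.tsum_mul_left]
      exact ENNReal.tsum_le_tsum fun m =>
        hc _ (measurableSet_of_dependsOn (finite_Iio m) (hH m))
    have hlim := (ENNReal.tendsto_sum_nat_add _ hsum).eventually_le_const (hε j)
    exact ((eventually_gt_atTop n).and hlim).exists
  obtain ⟨k, hk0, hk, hkε⟩ := exists_strictMono_forall_succ htail
  refine ⟨k, fun j => ⋃ m ∈ Ico (k (j + 1)) (k (j + 2)), saturation (Iio (k j)) (H m), hk0, hk,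
    fun j => ?_, fun j => ?_, fun x hx => ?_⟩
  · refine dependsOn_mem_iUnion fun m => dependsOn_mem_iUnion fun hm => ?_
    exact (dependsOn_mem_saturation (hH m)).mono fun i hi => ⟨not_lt.1 hi.2, hi.1.trans hm.2⟩
  · refine (measure_mono (iUnion₂_subset fun m hm => ?_)).trans
      ((measure_iUnion_le _).trans (hkε j))
    exact subset_iUnion_of_subset (m - k (j + 1)) (by rw [Nat.sub_add_cancel hm.1])
  · refine (infinite_setOf_inter_Ico_nonempty (hk.comp (strictMono_id.add_const 1))
      (hHcov x hx)).mono ?_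
    rintro j ⟨m, hxm, hm⟩
    exact mem_biUnion hm (subset_saturation hxm)

end NullSet

section Blocks

/-- The union of the even-numbered blocks of the partition of `ℕ` into the intervals
`[k n, k (n + 1))`. -/
def evenBlocks (k : ℕ → ℕ) : Set ℕ :=
  ⋃ a, Ico (k (2 * a)) (k (2 * a + 1))

variable {k : ℕ → ℕ}

lemma Ico_inter_evenBlocks_subset (hk : Monotone k) (j : ℕ) :
    Ico (k j) (k (j + 2)) ∩ evenBlocks k ⊆
      Ico (k (2 * ((j + 1) / 2))) (k (2 * ((j + 1) / 2 + 1))) := by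
  rintro i ⟨hij, hi⟩
  obtain ⟨a, ha⟩ := mem_iUnion.1 hi
  have haj : 2 * a < j + 2 := hk.reflect_lt (ha.1.trans_lt hij.2)
  have hja : j < 2 * a + 1 := hk.reflect_lt (hij.1.trans_lt ha.2)
  have hdiv : (j + 1) / 2 = a := by omega
  rw [hdiv]
  exact Ico_subset_Ico_right (hk (by omega)) ha

lemma Ico_diff_evenBlocks_subset (hk : Monotone k) (j : ℕ) :
    Ico (k j) (k (j + 2)) \ evenBlocks k ⊆ Ico (k (2 * (j / 2))) (k (2 * (j / 2 + 1))) := by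
  refine fun i ⟨hij, hi⟩ => ⟨(hk (by omega)).trans hij.1, not_le.1 fun hle => hi ?_⟩
  exact mem_iUnion.2 ⟨j / 2 + 1, hle, hij.2.trans_le (hk (by omega))⟩

end Blocks

section IsSmall

variable {μ : Measure (ℕ → Bool)} {H : Set (ℕ → Bool)}

lemma IsSmall.measure_eq_zero (hH : IsSmall μ H) : μ H = 0 := by
  obtain ⟨k, J, -, -, -, hHJ, hsum⟩ := hH
  refine measure_mono_null hHJ ?_
  rw [← cofinite.limsup_set_eq]
  exact measure_limsup_cofinite_eq_zero hsum

lemma isSmall_of_blocks {k φ : ℕ → ℕ} {T : ℕ → Set (ℕ → Bool)} (hk0 : k 0 = 0) (hk : StrictMono k)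
    (hφ : ∀ n, (φ ⁻¹' {n}).Finite)
    (hT : ∀ j, DependsOn (· ∈ T j) (Ico (k (φ j)) (k (φ j + 1))))
    (hH : ∀ x ∈ H, {j | x ∈ T j}.Infinite) (hsum : ∑' j, μ (T j) ≠ ⊤) : IsSmall μ H :=
  ⟨k, fiberUnion φ T, hk0, hk,
    fun n _ _ hxy => (dependsOn_mem_fiberUnion (S := fun n => Ico (k n) (k (n + 1))) hT n
      fun i hi => hxy i hi.1 hi.2).to_iff,
    fun x hx => infinite_setOf_mem_fiberUnion hφ (hH x hx),
    ne_top_of_le_ne_top hsum (tsum_measure_fiberUnion_le μ)⟩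

variable {k : ℕ → ℕ} [DecidablePred (· ∈ evenBlocks k)] {C : ℕ → Set (ℕ → Bool)} {ε : ℕ → ℝ≥0∞}

lemma isSmall_of_infinite_mem_largeSections (hk0 : k 0 = 0) (hk : StrictMono k)
    (hC : ∀ j, DependsOn (· ∈ C j) (Ico (k j) (k (j + 2))))
    (hH : ∀ x ∈ H, {j | x ∈ largeSections μ (evenBlocks k) (C j) (ε j)}.Infinite)
    (hsum : ∑' j, μ (largeSections μ (evenBlocks k) (C j) (ε j)) ≠ ⊤) : IsSmall μ H :=
  isSmall_of_blocks (k := fun n => k (2 * n)) (φ := fun j => (j + 1) / 2) hk0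
    (fun a b hab => hk (by omega))
    (fun n => (finite_Iic (2 * n)).subset fun j (hj : (j + 1) / 2 = n) => mem_Iic.2 (by omega))
    (fun j => (dependsOn_mem_largeSections (hC j) _).mono
      (Ico_inter_evenBlocks_subset hk.monotone j))
    hH hsum

lemma isSmall_of_infinite_section_mem (hk0 : k 0 = 0) (hk : StrictMono k)
    (hC : ∀ j, DependsOn (· ∈ C j) (Ico (k j) (k (j + 2)))) (hε : ∑' j, ε j ≠ ⊤) {x : ℕ → Bool}
    (hx : {j | x ∈ largeSections μ (evenBlocks k) (C j) (ε j)}.Finite)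
    (hH : ∀ y ∈ H, {j | (evenBlocks k).piecewise x y ∈ C j}.Infinite) : IsSmall μ H := by
  let T (j : ℕ) : Set (ℕ → Bool) :=
    {y | x ∉ largeSections μ (evenBlocks k) (C j) (ε j) ∧ (evenBlocks k).piecewise x y ∈ C j}
  have hTμ (j : ℕ) : μ (T j) ≤ ε j := by
    by_cases hxj : x ∈ largeSections μ (evenBlocks k) (C j) (ε j)
    · simp [T, hxj]
    · exact (measure_mono fun y hy => hy.2).trans (not_le.1 hxj).le
  refine isSmall_of_blocks (k := fun n => k (2 * n)) (φ := fun j => j / 2) (T := T) hk0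
    (fun a b hab => hk (by omega))
    (fun n => (finite_Iic (2 * n + 1)).subset fun j (hj : j / 2 = n) => mem_Iic.2 (by omega))
    (fun j y y' hy => ?_)
    (fun y hy => ((hH y hy).sdiff hx).mono fun j hj => ⟨hj.2, hj.1⟩)
    (ne_top_of_le_ne_top hε (ENNReal.tsum_le_tsum hTμ))
  have hsection := (dependsOn_comp_piecewise_right (hC j) x).mono
    (Ico_diff_evenBlocks_subset hk.monotone j)
  exact congrArg (_ ∧ ·) (hsection hy)

theorem isSmall_of_forall_piecewise_mem {m : ℕ → Measure Bool} [∀ n, IsProbabilityMeasure (m n)]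
    (hm : ∀ n b, m n {b} ≠ 0) (hH : Measure.infinitePi m H = 0)
    (hmix : ∀ (S : Set ℕ) [DecidablePred (· ∈ S)], ∀ x ∈ H, ∀ y ∈ H, S.piecewise x y ∈ H) :
    IsSmall (Measure.infinitePi m) H := by
  classical
  let ε (j : ℕ) : ℝ≥0∞ := 2⁻¹ ^ j
  have hε0 (j : ℕ) : ε j ≠ 0 := pow_ne_zero j (by simp)
  have hε (j : ℕ) : ε j ≠ ⊤ := ENNReal.pow_ne_top (by simp)
  have hεsum : ∑' j, ε j ≠ ⊤ := by simp [ε, ENNReal.tsum_geometric]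
  obtain ⟨k, C, hk0, hk, hC, hCμ, hcov⟩ := exists_blocks_cover_of_null hm hH
    fun j => ENNReal.mul_pos (hε0 j) (hε0 j)
  let B (j : ℕ) := largeSections (Measure.infinitePi m) (evenBlocks k) (C j) (ε j)
  have hBμ (j : ℕ) : Measure.infinitePi m (B j) ≤ ε j := by
    refine (ENNReal.mul_le_mul_iff_right (hε0 j) (hε j)).1 (le_trans ?_ (hCμ j))
    exact mul_infinitePi_largeSections_le m _
      (measurableSet_of_dependsOn (finite_Ico _ _) (hC j)) _
  by_cases hB : ∀ x ∈ H, {j | x ∈ B j}.Infinite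
  · exact isSmall_of_infinite_mem_largeSections hk0 hk hC hB
      (ne_top_of_le_ne_top hεsum (ENNReal.tsum_le_tsum hBμ))
  · push Not at hB
    obtain ⟨x, hx, hxB⟩ := hB
    exact isSmall_of_infinite_section_mem hk0 hk hC hεsum hxB
      fun y hy => hcov _ (hmix _ x hx y hy)

end IsSmall

section Bernoulli

lemma eq_infinitePi_of_forall_pi_singleton {ι : Type*} {X : ι → Type*} [∀ i, Countable (X i)]
    [∀ i, MeasurableSpace (X i)] [∀ i, MeasurableSingletonClass (X i)] {μ : Measure (∀ i, X i)}
    {ν : ∀ i, Measure (X i)} [∀ i, IsProbabilityMeasure (ν i)]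
    (h : ∀ (s : Finset ι) (f : ∀ i, X i), μ ((s : Set ι).pi fun i => {f i}) = ∏ i ∈ s, ν i {f i}) :
    μ = Measure.infinitePi ν := by
  refine IsProjectiveLimit.unique (P := fun s : Finset ι => Measure.pi fun i : s => ν i)
    (fun s => Measure.ext_of_singleton fun g => ?_) (Measure.isProjectiveLimit_infinitePi ν)
  have (i : ι) : Nonempty (X i) := (ν i).nonempty_of_neZero
  obtain ⟨f, rfl⟩ : ∃ f, s.restrict f = g := Subtype.exists_pi_extension g
  have hpre : s.restrict ⁻¹' {s.restrict f} = (s : Set ι).pi fun i => {f i} := by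
    ext x
    simp [funext_iff]
  rw [Measure.map_apply (Finset.measurable_restrict s) (measurableSet_singleton _), hpre, h,
    Measure.pi_singleton]
  exact (s.prod_coe_sort fun i => ν i {f i}).symm

lemma IsBernoulli.exists_eq_infinitePi {ι : Type*} {μ : Measure (ι → Bool)} {p : ι → ℝ≥0∞}
    (hμ : IsBernoulli μ p) : ∃ m : ι → Measure Bool, (∀ i, IsProbabilityMeasure (m i)) ∧
      (∀ i b, m i {b} = if b then p i else 1 - p i) ∧ μ = Measure.infinitePi m := by
  have := hμ.1
  let m (i : ι) : Measure Bool := μ.map fun x => x i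
  have hm (i : ι) : IsProbabilityMeasure (m i) :=
    Measure.isProbabilityMeasure_map (measurable_pi_apply i).aemeasurable
  have hmp (i : ι) (b : Bool) : m i {b} = if b then p i else 1 - p i := by
    rw [Measure.map_apply (measurable_pi_apply i) (measurableSet_singleton b)]
    simpa [preimage] using hμ.2 {i} fun _ => b
  refine ⟨m, hm, hmp, eq_infinitePi_of_forall_pi_singleton fun s f => ?_⟩
  simp only [hmp]
  exact hμ.2 s f

end Bernoulli

section Coupling

lemma exists_forall_of_ae_fst_of_ae_snd {ι : Type*} [Countable ι] {X Y : ι → Type*}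
    [∀ i, MeasurableSpace (X i)] [∀ i, MeasurableSpace (Y i)] {ν : ∀ i, Measure (X i × Y i)}
    [∀ i, IsProbabilityMeasure (ν i)] {R : ∀ i, X i → Y i → Prop}
    (hR : ∀ i, ∀ᵐ z ∂ν i, R i z.1 z.2) {A : Set (∀ i, X i)} {B : Set (∀ i, Y i)}
    (hA : ∀ᵐ x ∂Measure.infinitePi fun i => (ν i).fst, x ∈ A)
    (hB : ∀ᵐ y ∂Measure.infinitePi fun i => (ν i).snd, y ∈ B) :
    ∃ x ∈ A, ∃ y ∈ B, ∀ i, R i (x i) (y i) := by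
  have hfst : ∀ᵐ ω ∂Measure.infinitePi ν, (fun i => (ω i).1) ∈ A := by
    have hmap : ∀ᵐ x ∂(Measure.infinitePi ν).map (fun ω i => (ω i).1), x ∈ A := by
      rwa [Measure.infinitePi_map_pi ν fun i => measurable_fst]
    exact ae_of_ae_map (Measurable.aemeasurable (by fun_prop)) hmap
  have hsnd : ∀ᵐ ω ∂Measure.infinitePi ν, (fun i => (ω i).2) ∈ B := by
    have hmap : ∀ᵐ y ∂(Measure.infinitePi ν).map (fun ω i => (ω i).2), y ∈ B := by
      rwa [Measure.infinitePi_map_pi ν fun i => measurable_snd]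
    exact ae_of_ae_map (Measurable.aemeasurable (by fun_prop)) hmap
  have hrel : ∀ᵐ ω ∂Measure.infinitePi ν, ∀ i, R i (ω i).1 (ω i).2 :=
    ae_all_iff.2 fun i =>
      (measurePreserving_eval_infinitePi ν i).quasiMeasurePreserving.ae (hR i)
  obtain ⟨ω, hx, hy, hω⟩ := (hfst.and (hsnd.and hrel)).exists
  exact ⟨_, hx, _, hy, hω⟩

lemma exists_coupling_ae_not_and {m : Measure Bool} (hm : m {true} ≤ m {false}) :
    ∃ ν : Measure (Bool × Bool), ν.fst = m ∧ ν.snd = m ∧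
      ∀ᵐ z ∂ν, ¬ (z.1 = true ∧ z.2 = true) := by
  let ν : Measure (Bool × Bool) := m {true} • Measure.dirac (true, false) +
    m {true} • Measure.dirac (false, true) +
    (m {false} - m {true}) • Measure.dirac (false, false)
  refine ⟨ν, ?_, ?_, ?_⟩
  · refine Measure.ext_of_singleton fun b => ?_
    rw [Measure.fst_apply (measurableSet_singleton b)]
    cases b <;> simp [ν, add_tsub_cancel_of_le hm]
  · refine Measure.ext_of_singleton fun b => ?_
    rw [Measure.snd_apply (measurableSet_singleton b)]
    cases b <;> simp [ν, add_tsub_cancel_of_le hm]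
  · rw [ae_iff]
    simp [ν]

lemma exists_forall_not_and_of_ae_infinitePi {ι : Type*} [Countable ι]
    {m : ι → Measure Bool} [∀ i, IsProbabilityMeasure (m i)] (hm : ∀ i, m i {true} ≤ m i {false})
    {A : Set (ι → Bool)} (hA : ∀ᵐ x ∂Measure.infinitePi m, x ∈ A) :
    ∃ x ∈ A, ∃ y ∈ A, ∀ i, ¬ (x i = true ∧ y i = true) := by
  choose ν hfst hsnd hdisj using fun i => exists_coupling_ae_not_and (hm i)
  have (i : ι) : IsProbabilityMeasure (ν i) :=
    ⟨by rw [← Measure.fst_univ, hfst, measure_univ]⟩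
  exact exists_forall_of_ae_fst_of_ae_snd (R := fun _ a b => ¬ (a = true ∧ b = true))
    hdisj (by simpa only [hfst]) (by simpa only [hsnd])

end Coupling

section Filter

variable {F : Filter ℕ}

lemma dependsOn_mem_filterSet (hF : F ≤ cofinite) (s : Finset ℕ) :
    DependsOn (· ∈ filterSet F) (s : Set ℕ)ᶜ := fun x y hxy => by
  have hs : (s : Set ℕ)ᶜ ∈ F := hF s.finite_toSet.compl_mem_cofinite
  exact propext (congr_sets (mem_of_superset hs fun n hn => by simp [hxy n hn]))

lemma piecewise_mem_filterSet (S : Set ℕ) [DecidablePred (· ∈ S)] {x y : ℕ → Bool}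
    (hx : x ∈ filterSet F) (hy : y ∈ filterSet F) : S.piecewise x y ∈ filterSet F :=
  mem_of_superset (inter_mem hx hy) fun n ⟨hxn, hyn⟩ => by
    by_cases hn : n ∈ S
    · exact (S.piecewise_eq_of_mem x y hn).trans hxn
    · exact (S.piecewise_eq_of_notMem x y hn).trans hyn

lemma infinitePi_compl_filterSet_ne_zero {m : ℕ → Measure Bool}
    [∀ n, IsProbabilityMeasure (m n)] (hm : ∀ n, m n {true} ≤ m n {false}) [F.NeBot] :
    Measure.infinitePi m (filterSet F)ᶜ ≠ 0 := fun h => by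
  obtain ⟨x, hx, y, hy, hxy⟩ := exists_forall_not_and_of_ae_infinitePi hm h
  obtain ⟨n, hn⟩ := Filter.nonempty_of_mem (inter_mem hx hy)
  exact hxy n hn

end Filter

theorem filter_measurable_iff_small (μ : Measure (ℕ → Bool)) (p : ℕ → ℝ≥0∞)
    (hp : ∀ n, 0 < p n ∧ p n ≤ 1 / 2) (hμ : IsBernoulli μ p)
    (F : Filter ℕ) [F.NeBot] (hF : F ≤ Filter.cofinite) :
    NullMeasurableSet (filterSet F) μ ↔ IsSmall μ (filterSet F) := by
  obtain ⟨m, _, hmp, rfl⟩ := hμ.exists_eq_infinitePi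
  have hp_le (n : ℕ) : p n ≤ 1 - p n := by
    calc p n ≤ 1 - 1 / 2 := by simpa using (hp n).2
      _ ≤ 1 - p n := tsub_le_tsub_left (hp n).2 1
  have hm_le (n : ℕ) : m n {true} ≤ m n {false} := by simpa [hmp] using hp_le n
  have hm_ne (n : ℕ) (b : Bool) : m n {b} ≠ 0 := by
    cases b
    · simpa [hmp] using ((hp n).1.trans_le (hp_le n)).ne'
    · simpa [hmp] using (hp n).1.ne'
  refine ⟨fun hmeas => ?_, fun hsmall => .of_null hsmall.measure_eq_zero⟩
  rcases infinitePi_eq_zero_or_compl_eq_zero_of_dependsOn hmeas (dependsOn_mem_filterSet hF)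
    with hnull | hconull
  · exact isSmall_of_forall_piecewise_mem hm_ne hnull
      fun S _ x hx y hy => piecewise_mem_filterSet S hx hy
  · exact absurd hconull (infinitePi_compl_filterSet_ne_zero hm_le)
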